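/- Let ℓ > 0, and for k ∈ ℕ₀ and m ∈ ℤ set ζ_{k,m} = −(2k+1) + 2πim/ℓ. Then: (i) the Hadamard double product P_F(s) = ∏_{k=0}^∞ ∏_{m=−∞}^∞ (1 − s/ζ_{k,m})² exp(2s/ζ_{k,m} + (s/ζ_{k,m})²) converges for every s ∈ ℂ and defines an entire function of order at most two, i.e., for every η > 0 there is a constant C > 0 such that |P_F(s)| ≤ C exp(|s|^{2+η}) for all s ∈ ℂ; and (ii) there exist complex constants a, b, c (depending only on ℓ) such that Z_F(s) = exp(a + bs + cs²) · P_F(s) for all s ∈ ℂ, where Z_F(s) = e^{−sℓ/4} ∏_{k=0}^∞ (1 − e^{−(s+2k+1)ℓ})². -/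

import Mathlib

/-- The resonances of the Dirichlet Laplacian on the hyperbolic funnel of boundary
length `ℓ`: `ζ_{k,m} = -(2k+1) + 2πim/ℓ` for `k ∈ ℕ₀`, `m ∈ ℤ`. -/
noncomputable def funnelResonance (ℓ : ℝ) (k : ℕ) (m : ℤ) : ℂ :=
  -(2 * (k : ℂ) + 1) + 2 * Real.pi * Complex.I * m / ℓ

/-- The genus-two canonical (Hadamard) product over the funnel resonance set, each point
taken with multiplicity two:
`P_F(s) = ∏_{k,m} (1 - s/ζ_{k,m})² exp(2s/ζ_{k,m} + (s/ζ_{k,m})²)`. -/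
noncomputable def funnelHadamard (ℓ : ℝ) (s : ℂ) : ℂ :=
  ∏' p : ℕ × ℤ, (1 - s / funnelResonance ℓ p.1 p.2) ^ 2 *
    Complex.exp (2 * s / funnelResonance ℓ p.1 p.2 + (s / funnelResonance ℓ p.1 p.2) ^ 2)

/-- The Selberg zeta function of the funnel of boundary length `ℓ`:
`Z_F(s) = e^{-sℓ/4} ∏_{k=0}^∞ (1 - e^{-(s+2k+1)ℓ})²`. -/
noncomputable def funnelZeta (ℓ : ℝ) (s : ℂ) : ℂ :=
  Complex.exp (-s * ℓ / 4) * ∏' k : ℕ, (1 - Complex.exp (-(s + 2 * k + 1) * ℓ)) ^ 2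

/-!
`P_F` is the square of the genus-two canonical product over the resonances, which form part of a
lattice. Hence `∑ |ζ|^(-τ)` converges for every `τ > 2`: the exponent `3` gives convergence of the
product, and exponents just above `2` bound its order.

Each row of resonances is an affine copy of `ℤ`, so Euler's sine product identifies
`1 - exp (-(s + 2k + 1)ℓ)` with the canonical product of the `k`-th row, up to the exponential of a
quadratic polynomial. Passing from finite products to the infinite ones needs no formula for the
coefficients of these polynomials: pointwise convergence of `exp (A_N + B_N s + C_N s²)` for `s`
near `0` forces `B_N`, `C_N` and `exp A_N` to converge.
-/

open Complex Filter Finset Topology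
open scoped Real

section WeierstrassFactor

/-- The Weierstrass elementary factor of genus `n`, `E_n(z) = (1 - z) exp(z + z²/2 + ⋯ + zⁿ/n)`. -/
noncomputable def weierstrassFactor (n : ℕ) (z : ℂ) : ℂ :=
  (1 - z) * exp (∑ j ∈ range n, z ^ (j + 1) / (j + 1))

variable {n : ℕ} {z : ℂ}

lemma differentiable_weierstrassFactor (n : ℕ) : Differentiable ℂ (weierstrassFactor n) := by
  unfold weierstrassFactor
  fun_prop

lemma weierstrassFactor_ne_zero (hz : z ≠ 1) : weierstrassFactor n z ≠ 0 :=
  mul_ne_zero (sub_ne_zero.2 hz.symm) (exp_ne_zero _)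

lemma weierstrassFactor_eq_exp_log_sub_logTaylor (hz : z ≠ 1) :
    weierstrassFactor n z = exp (log (1 + -z) - logTaylor (n + 1) (-z)) := by
  have hne : 1 + -z ≠ 0 := by rwa [← sub_eq_add_neg, sub_ne_zero, ne_comm]
  have hT : logTaylor (n + 1) (-z) = -∑ j ∈ range n, z ^ (j + 1) / (j + 1) := by
    rw [logTaylor, sum_range_succ', ← sum_neg_distrib]
    simp only [CharP.cast_eq_zero, div_zero, add_zero]
    refine sum_congr rfl fun j _ => ?_
    rw [← neg_one_mul z, mul_pow, ← mul_assoc, ← pow_add, Odd.neg_one_pow ⟨j + 1, by ring⟩]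
    push_cast
    ring
  rw [hT, sub_neg_eq_add, exp_add, exp_log hne, weierstrassFactor, sub_eq_add_neg]

lemma norm_weierstrassFactor_sub_one_le (n : ℕ) (hz : ‖z‖ ≤ 1 / 2) :
    ‖weierstrassFactor n z - 1‖ ≤ 4 * ‖z‖ ^ (n + 1) := by
  have hz1 : z ≠ 1 := by
    rintro rfl
    norm_num at hz
  have hinv : (1 - ‖z‖)⁻¹ ≤ 2 := by
    rw [inv_le_comm₀ (by linarith) two_pos]
    linarith
  have hlog : ‖log (1 + -z) - logTaylor (n + 1) (-z)‖ ≤ 2 * ‖z‖ ^ (n + 1) := by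
    calc ‖log (1 + -z) - logTaylor (n + 1) (-z)‖
        ≤ ‖z‖ ^ (n + 1) * (1 - ‖z‖)⁻¹ / (n + 1) := by
          simpa only [norm_neg] using
            norm_log_sub_logTaylor_le n (z := -z) (by rw [norm_neg]; linarith)
      _ ≤ ‖z‖ ^ (n + 1) * (1 - ‖z‖)⁻¹ :=
          div_le_self (mul_nonneg (by positivity) (inv_nonneg.2 (by linarith))) (by simp)
      _ ≤ ‖z‖ ^ (n + 1) * 2 := by gcongr
      _ = 2 * ‖z‖ ^ (n + 1) := mul_comm _ _
  have hpow : ‖z‖ ^ (n + 1) ≤ ‖z‖ :=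
    pow_le_of_le_one (norm_nonneg z) (by linarith) n.succ_ne_zero
  rw [weierstrassFactor_eq_exp_log_sub_logTaylor hz1]
  linarith [norm_exp_sub_one_le (x := log (1 + -z) - logTaylor (n + 1) (-z)) (by linarith)]

lemma norm_weierstrassFactor_le_exp_norm_add_sum (n : ℕ) (z : ℂ) :
    ‖weierstrassFactor n z‖ ≤ Real.exp (‖z‖ + ∑ j ∈ range n, ‖z‖ ^ (j + 1) / (j + 1)) := by
  have hlin : ‖1 - z‖ ≤ Real.exp ‖z‖ :=
    calc ‖1 - z‖ ≤ ‖(1 : ℂ)‖ + ‖z‖ := norm_sub_le 1 z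
      _ ≤ Real.exp ‖z‖ := by
        rw [norm_one, add_comm]
        exact Real.add_one_le_exp _
  have hsum : ‖∑ j ∈ range n, z ^ (j + 1) / ((j : ℂ) + 1)‖
      ≤ ∑ j ∈ range n, ‖z‖ ^ (j + 1) / (j + 1) := by
    refine (norm_sum_le _ _).trans_eq (sum_congr rfl fun j _ => ?_)
    rw [norm_div, norm_pow]
    norm_cast
  rw [weierstrassFactor, norm_mul, Real.exp_add]
  gcongr
  exact (norm_exp_le_exp_norm _).trans (Real.exp_le_exp.2 hsum)

lemma sum_pow_div_le_rpow {x τ : ℝ} (hx : 1 / 2 ≤ x) (hnτ : n ≤ τ) :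
    ∑ j ∈ range n, x ^ (j + 1) / (j + 1) ≤ (2 * x) ^ τ := by
  have hx0 : 0 ≤ x := by linarith
  have hx1 : 1 ≤ 2 * x := by linarith
  have hterm : ∀ j ∈ range n, x ^ (j + 1) / (j + 1) ≤ (2 * x) ^ τ / 2 * (1 / 2) ^ j := by
    intro j hj
    have hjτ : ((j + 1 : ℕ) : ℝ) ≤ τ := le_trans (Nat.cast_le.2 (mem_range.1 hj)) hnτ
    calc x ^ (j + 1) / (j + 1) ≤ x ^ (j + 1) := div_le_self (pow_nonneg hx0 _) (by simp)
      _ = (2 * x) ^ ((j + 1 : ℕ) : ℝ) / 2 * (1 / 2) ^ j := by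
          rw [Real.rpow_natCast, mul_pow, one_div, inv_pow]
          field_simp
          ring
      _ ≤ (2 * x) ^ τ / 2 * (1 / 2) ^ j := by gcongr
  calc ∑ j ∈ range n, x ^ (j + 1) / (j + 1)
      ≤ ∑ j ∈ range n, (2 * x) ^ τ / 2 * (1 / 2) ^ j := sum_le_sum hterm
    _ = (2 * x) ^ τ / 2 * ∑ j ∈ range n, (1 / 2) ^ j := (mul_sum ..).symm
    _ ≤ (2 * x) ^ τ / 2 * 2 := by
        gcongr
        exact sum_geometric_two_le n
    _ = (2 * x) ^ τ := by ring

lemma norm_weierstrassFactor_le {τ : ℝ} (hτ : 1 ≤ τ) (hnτ : n ≤ τ) (hτn : τ ≤ n + 1) (z : ℂ) :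
    ‖weierstrassFactor n z‖ ≤ Real.exp (2 * (2 * ‖z‖) ^ τ) := by
  rcases le_total ‖z‖ (1 / 2) with hz | hz
  · have hpow : ‖z‖ ^ (n + 1) ≤ (2 * ‖z‖) ^ τ / 2 := by
      rcases (norm_nonneg z).eq_or_lt with h0 | h0
      · rw [← h0, zero_pow n.succ_ne_zero]
        positivity
      · rw [le_div_iff₀' two_pos]
        calc 2 * ‖z‖ ^ (n + 1) ≤ 2 ^ (n + 1) * ‖z‖ ^ (n + 1) := by
              gcongr
              exact le_self_pow₀ one_le_two n.succ_ne_zero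
          _ = (2 * ‖z‖) ^ ((n + 1 : ℕ) : ℝ) := by rw [← mul_pow, Real.rpow_natCast]
          _ ≤ (2 * ‖z‖) ^ τ :=
              Real.rpow_le_rpow_of_exponent_ge (by positivity) (by linarith) (by exact_mod_cast hτn)
    have htri : ‖weierstrassFactor n z‖ ≤ 4 * ‖z‖ ^ (n + 1) + 1 := by
      have := norm_le_norm_sub_add (weierstrassFactor n z) 1
      rw [norm_one] at this
      linarith [norm_weierstrassFactor_sub_one_le n hz]
    linarith [Real.add_one_le_exp (2 * (2 * ‖z‖) ^ τ)]
  · have hx : 1 ≤ 2 * ‖z‖ := by linarith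
    have hlin : ‖z‖ ≤ (2 * ‖z‖) ^ τ := by
      linarith [Real.self_le_rpow_of_one_le hx hτ]
    have hsum := sum_pow_div_le_rpow hz hnτ
    refine (norm_weierstrassFactor_le_exp_norm_add_sum n z).trans (Real.exp_le_exp.2 ?_)
    linarith

end WeierstrassFactor

lemma summable_pow_of_summable_rpow {ι : Type*} {a : ι → ℝ} {τ : ℝ} {m : ℕ} (ha : ∀ i, 0 ≤ a i)
    (hτ : 0 < τ) (hτm : τ ≤ m) (h : Summable fun i => a i ^ τ) : Summable fun i => a i ^ m := by
  refine .of_norm_bounded_eventually h ?_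
  filter_upwards [h.tendsto_cofinite_zero.eventually_le_const one_pos] with i hi
  rw [Real.norm_of_nonneg (pow_nonneg (ha i) m), ← Real.rpow_natCast]
  have hle : a i ≤ 1 := le_of_not_gt fun hlt => (Real.one_lt_rpow hlt hτ).not_ge hi
  exact Real.rpow_le_rpow_of_exponent_ge' (ha i) hle hτ.le hτm

section CanonicalProduct

/-- The canonical product of genus `n` over the family `ζ`. An index with `ζ i = 0` contributes the
factor `1`, by the convention `s / 0 = 0`. -/
noncomputable def canonicalProduct {ι : Type*} (n : ℕ) (ζ : ι → ℂ) (s : ℂ) : ℂ :=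
  ∏' i, weierstrassFactor n (s / ζ i)

variable {ι κ : Type*} {n : ℕ} {ζ : ι → ℂ}

lemma eventually_norm_weierstrassFactor_div_sub_one_le
    (hζ : Summable fun i => ‖ζ i‖⁻¹ ^ (n + 1)) (R : ℝ) :
    ∀ᶠ i in cofinite, ∀ s : ℂ, ‖s‖ ≤ R →
      ‖weierstrassFactor n (s / ζ i) - 1‖ ≤ 4 * R ^ (n + 1) * ‖ζ i‖⁻¹ ^ (n + 1) := by
  have hsmall := (hζ.mul_left (R ^ (n + 1))).tendsto_cofinite_zero.eventually_lt_const
    (show (0 : ℝ) < (1 / 2) ^ (n + 1) by positivity)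
  filter_upwards [hsmall] with i hi s hs
  rw [← mul_pow] at hi
  have hRζ : R * ‖ζ i‖⁻¹ < 1 / 2 := lt_of_pow_lt_pow_left₀ (n + 1) (by norm_num) hi
  have hsζ : ‖s / ζ i‖ ≤ R * ‖ζ i‖⁻¹ := by
    rw [norm_div, div_eq_mul_inv]
    gcongr
  calc ‖weierstrassFactor n (s / ζ i) - 1‖ ≤ 4 * ‖s / ζ i‖ ^ (n + 1) :=
        norm_weierstrassFactor_sub_one_le n (hsζ.trans hRζ.le)
    _ ≤ 4 * (R * ‖ζ i‖⁻¹) ^ (n + 1) := by gcongr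
    _ = 4 * R ^ (n + 1) * ‖ζ i‖⁻¹ ^ (n + 1) := by ring

lemma summable_norm_weierstrassFactor_div_sub_one
    (hζ : Summable fun i => ‖ζ i‖⁻¹ ^ (n + 1)) (s : ℂ) :
    Summable fun i => ‖weierstrassFactor n (s / ζ i) - 1‖ := by
  refine .of_norm_bounded_eventually (hζ.mul_left (4 * ‖s‖ ^ (n + 1))) ?_
  filter_upwards [eventually_norm_weierstrassFactor_div_sub_one_le hζ ‖s‖] with i hi
  simpa only [norm_norm] using hi s le_rfl

lemma multipliable_weierstrassFactor_div (hζ : Summable fun i => ‖ζ i‖⁻¹ ^ (n + 1)) (s : ℂ) :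
    Multipliable fun i => weierstrassFactor n (s / ζ i) := by
  simpa only [add_sub_cancel] using
    multipliable_one_add_of_summable (summable_norm_weierstrassFactor_div_sub_one hζ s)

lemma canonicalProduct_ne_zero (hζ : Summable fun i => ‖ζ i‖⁻¹ ^ (n + 1)) {s : ℂ}
    (hs : ∀ i, ζ i ≠ s) : canonicalProduct n ζ s ≠ 0 := by
  have hfactor : ∀ i, weierstrassFactor n (s / ζ i) ≠ 0 := fun i =>
    weierstrassFactor_ne_zero fun h => hs i (eq_of_div_eq_one h).symm
  simpa only [canonicalProduct, add_sub_cancel] using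
    tprod_one_add_ne_zero_of_summable (f := fun i => weierstrassFactor n (s / ζ i) - 1)
      (by simpa only [add_sub_cancel] using hfactor)
      (summable_norm_weierstrassFactor_div_sub_one hζ s)

lemma differentiable_canonicalProduct (hζ : Summable fun i => ‖ζ i‖⁻¹ ^ (n + 1)) :
    Differentiable ℂ (canonicalProduct n ζ) := by
  intro s
  have hfactor : ∀ i, Differentiable ℂ fun s => weierstrassFactor n (s / ζ i) := fun i =>
    (differentiable_weierstrassFactor n).comp (differentiable_id.div_const _)
  have hbound : ∀ᶠ i in cofinite, ∀ t ∈ Metric.ball (0 : ℂ) (‖s‖ + 1),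
      ‖weierstrassFactor n (t / ζ i) - 1‖ ≤ 4 * (‖s‖ + 1) ^ (n + 1) * ‖ζ i‖⁻¹ ^ (n + 1) := by
    filter_upwards [eventually_norm_weierstrassFactor_div_sub_one_le hζ (‖s‖ + 1)] with i hi t ht
    exact hi t (mem_ball_zero_iff.1 ht).le
  have hprod := (hζ.mul_left (4 * (‖s‖ + 1) ^ (n + 1))).hasProdLocallyUniformlyOn_one_add
    Metric.isOpen_ball hbound fun i => ((hfactor i).sub_const 1).continuous.continuousOn
  simp only [add_sub_cancel] at hprod
  have hdiff : DifferentiableOn ℂ (canonicalProduct n ζ) (Metric.ball 0 (‖s‖ + 1)) :=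
    (hasProdLocallyUniformlyOn_iff_tendstoLocallyUniformlyOn.1 hprod).differentiableOn
      (.of_forall fun F => .fun_finsetProd fun i _ => (hfactor i).differentiableOn)
      Metric.isOpen_ball
  exact hdiff.differentiableAt (Metric.isOpen_ball.mem_nhds (by simp))

lemma norm_canonicalProduct_le {τ : ℝ} (hζ : Summable fun i => ‖ζ i‖⁻¹ ^ τ) (hτ : 1 ≤ τ)
    (hnτ : n ≤ τ) (hτn : τ ≤ n + 1) (s : ℂ) :
    ‖canonicalProduct n ζ s‖ ≤ Real.exp (2 * 2 ^ τ * (∑' i, ‖ζ i‖⁻¹ ^ τ) * ‖s‖ ^ τ) := by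
  have hζn : Summable fun i => ‖ζ i‖⁻¹ ^ (n + 1) :=
    summable_pow_of_summable_rpow (fun i => by positivity) (by linarith) (by exact_mod_cast hτn) hζ
  refine le_of_tendsto (Tendsto.norm (multipliable_weierstrassFactor_div hζn s).hasProd)
    (.of_forall fun F => ?_)
  have hpow : ∀ i, (2 * ‖s / ζ i‖) ^ τ = 2 ^ τ * ‖s‖ ^ τ * ‖ζ i‖⁻¹ ^ τ := fun i => by
    rw [norm_div, div_eq_mul_inv, ← mul_assoc, Real.mul_rpow (by positivity) (by positivity),
      Real.mul_rpow two_pos.le (norm_nonneg s)]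
  calc ‖∏ i ∈ F, weierstrassFactor n (s / ζ i)‖
      ≤ ∏ i ∈ F, Real.exp (2 * (2 * ‖s / ζ i‖) ^ τ) := by
        rw [norm_prod]
        exact prod_le_prod (fun _ _ => norm_nonneg _) fun i _ =>
          norm_weierstrassFactor_le hτ hnτ hτn _
    _ = Real.exp (2 * 2 ^ τ * (∑ i ∈ F, ‖ζ i‖⁻¹ ^ τ) * ‖s‖ ^ τ) := by
        simp only [← Real.exp_sum, hpow, ← mul_sum]
        ring_nf
    _ ≤ Real.exp (2 * 2 ^ τ * (∑' i, ‖ζ i‖⁻¹ ^ τ) * ‖s‖ ^ τ) := by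
        gcongr
        exact hζ.sum_le_tsum F fun i _ => by positivity

lemma hasProd_canonicalProduct_uncurry {ζ : ι → κ → ℂ}
    (hζ : Summable fun p : ι × κ => ‖ζ p.1 p.2‖⁻¹ ^ (n + 1)) (s : ℂ) :
    HasProd (fun i => canonicalProduct n (ζ i) s) (canonicalProduct n (Function.uncurry ζ) s) :=
  (multipliable_weierstrassFactor_div (ζ := Function.uncurry ζ) hζ s).hasProd.prod_fiberwise
    fun i => (multipliable_weierstrassFactor_div (hζ.prod_factor i) s).hasProd

end CanonicalProduct

lemma exists_exp_mul_rpow_le {T τ σ : ℝ} (hT : 0 ≤ T) (hτ : 0 ≤ τ) (hτσ : τ < σ) :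
    ∃ C : ℝ, 0 < C ∧ ∀ x : ℝ, 0 ≤ x → Real.exp (T * x ^ τ) ≤ C * Real.exp (x ^ σ) := by
  have hσ : 0 < σ - τ := sub_pos.2 hτσ
  -- Beyond `M`, where `M ^ (σ - τ) = T`, the power `x ^ σ` dominates `T * x ^ τ`.
  set M : ℝ := T ^ (σ - τ)⁻¹
  refine ⟨Real.exp (T * M ^ τ), Real.exp_pos _, fun x hx => ?_⟩
  rw [← Real.exp_add, Real.exp_le_exp]
  rcases le_total x M with hxM | hMx
  · have : T * x ^ τ ≤ T * M ^ τ := by gcongr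
    linarith [Real.rpow_nonneg hx σ]
  · have hTx : T ≤ x ^ (σ - τ) := (Real.rpow_inv_le_iff_of_pos hT hx hσ).1 hMx
    have : T * x ^ τ ≤ x ^ σ :=
      calc T * x ^ τ ≤ x ^ (σ - τ) * x ^ τ := by gcongr
        _ = x ^ σ := by
          rw [← Real.rpow_add_of_nonneg hx hσ.le hτ, sub_add_cancel]
    have hM : 0 ≤ T * M ^ τ := by positivity
    linarith

section ExpQuadratic

variable {α : Type*} {l : Filter α}

lemma exists_tendsto_of_tendsto_exp {u : α → ℂ} {w₁ w₂ : ℂ} (hw₁ : w₁ ≠ 0) (hw₂ : w₂ ≠ 0)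
    (h₁ : Tendsto (fun n => exp (u n)) l (𝓝 w₁))
    (h₂ : Tendsto (fun n => exp (I * u n)) l (𝓝 w₂)) : ∃ c, Tendsto u l (𝓝 c) := by
  have hre : Tendsto (fun n => (u n).re) l (𝓝 (Real.log ‖w₁‖)) := by
    simpa [norm_exp] using h₁.norm.log (norm_ne_zero_iff.2 hw₁)
  have him : Tendsto (fun n => (u n).im) l (𝓝 (-Real.log ‖w₂‖)) := by
    simpa [norm_exp] using (h₂.norm.log (norm_ne_zero_iff.2 hw₂)).neg
  exact ⟨_, (hre.ofReal.add (him.ofReal.mul_const I)).congr fun n => re_add_im (u n)⟩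

lemma exists_tendsto_coeffs_of_tendsto_exp_quadratic {A B C : α → ℂ} {q : ℂ → ℂ}
    (hq : ∀ᶠ s in 𝓝 0, q s ≠ 0)
    (h : ∀ᶠ s in 𝓝 0, Tendsto (fun n => exp (A n + B n * s + C n * s ^ 2)) l (𝓝 (q s))) :
    ∃ b c, Tendsto B l (𝓝 b) ∧ Tendsto C l (𝓝 c) := by
  obtain ⟨hq₀, h₀⟩ := (hq.and h).self_of_nhds
  have hray (z : ℂ) : ∀ᶠ r : ℝ in 𝓝[>] 0, q (r * z) ≠ 0 ∧
      Tendsto (fun n => exp (A n + B n * (r * z) + C n * (r * z) ^ 2)) l (𝓝 (q (r * z))) := by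
    have hcont : Tendsto (fun r : ℝ => (r : ℂ) * z) (𝓝[>] 0) (𝓝 0) := by
      have : Continuous fun r : ℝ => (r : ℂ) * z := by fun_prop
      simpa using (this.tendsto 0).mono_left nhdsWithin_le_nhds
    exact hcont.eventually (hq.and h)
  obtain ⟨r, hr, ⟨hq₁, h₁⟩, ⟨hqI, hI⟩, ⟨hq₂, h₂⟩, ⟨hq₁I, h₁I⟩⟩ :=
    (eventually_mem_nhdsWithin.and <| (hray 1).and <| (hray I).and <| (hray 2).and
      (hray (1 + I))).exists
  have hr : (r : ℂ) ≠ 0 := ofReal_ne_zero.2 (ne_of_gt hr)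
  -- The mixed second difference of a quadratic polynomial in directions `s, t` is `2 * C * s * t`.
  obtain ⟨c, hc⟩ : ∃ c, Tendsto (fun n => 2 * (r : ℂ) ^ 2 * C n) l (𝓝 c) := by
    refine exists_tendsto_of_tendsto_exp
      (div_ne_zero (mul_ne_zero hq₂ hq₀) (mul_ne_zero hq₁ hq₁))
      (div_ne_zero (mul_ne_zero hq₁I hq₀) (mul_ne_zero hq₁ hqI))
      (((h₂.mul h₀).div (h₁.mul h₁) (mul_ne_zero hq₁ hq₁)).congr fun n => ?_)
      (((h₁I.mul h₀).div (h₁.mul hI) (mul_ne_zero hq₁ hqI)).congr fun n => ?_)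
    all_goals
      rw [Pi.div_apply, ← exp_add, ← exp_add, ← exp_sub]
      ring_nf
  have hC : Tendsto C l (𝓝 (c / (2 * (r : ℂ) ^ 2))) :=
    (hc.div_const _).congr fun n => by field_simp
  obtain ⟨b, hb⟩ : ∃ b, Tendsto (fun n => r * B n) l (𝓝 b) := by
    refine exists_tendsto_of_tendsto_exp
      (div_ne_zero hq₁ (mul_ne_zero hq₀ (exp_ne_zero _)))
      (div_ne_zero hqI (mul_ne_zero hq₀ (exp_ne_zero _)))
      ((h₁.div (h₀.mul (hC.mul_const ((r * 1 : ℂ) ^ 2)).cexp)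
        (mul_ne_zero hq₀ (exp_ne_zero _))).congr fun n => ?_)
      ((hI.div (h₀.mul (hC.mul_const ((r * I : ℂ) ^ 2)).cexp)
        (mul_ne_zero hq₀ (exp_ne_zero _))).congr fun n => ?_)
    all_goals
      simp only [Pi.div_apply, ← exp_add, ← exp_sub]
      ring_nf
  exact ⟨b / r, _, (hb.div_const _).congr fun n => by field_simp, hC⟩

/-- Two functions agree up to the exponential of a polynomial of degree at most two, the ambiguity
that a Hadamard factorization of genus two leaves undetermined. -/
def EqUpToExpQuadratic (f g : ℂ → ℂ) : Prop :=
  ∃ a b c : ℂ, ∀ s, f s = exp (a + b * s + c * s ^ 2) * g s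

namespace EqUpToExpQuadratic

variable {f g f₁ f₂ g₁ g₂ h : ℂ → ℂ}

lemma of_eq_const_mul_exp {K b c : ℂ} (hK : K ≠ 0)
    (hfg : ∀ s, f s = K * exp (b * s + c * s ^ 2) * g s) : EqUpToExpQuadratic f g :=
  ⟨log K, b, c, fun s => by rw [hfg, add_assoc, exp_add (log K), exp_log hK]⟩

lemma trans (hfg : EqUpToExpQuadratic f g) (hgh : EqUpToExpQuadratic g h) :
    EqUpToExpQuadratic f h := by
  obtain ⟨a, b, c, hfg⟩ := hfg
  obtain ⟨a', b', c', hgh⟩ := hgh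
  refine ⟨a + a', b + b', c + c', fun s => ?_⟩
  rw [hfg, hgh, ← mul_assoc, ← exp_add]
  ring_nf

lemma mul (h₁ : EqUpToExpQuadratic f₁ g₁) (h₂ : EqUpToExpQuadratic f₂ g₂) :
    EqUpToExpQuadratic (fun s => f₁ s * f₂ s) fun s => g₁ s * g₂ s := by
  obtain ⟨a, b, c, h₁⟩ := h₁
  obtain ⟨a', b', c', h₂⟩ := h₂
  refine ⟨a + a', b + b', c + c', fun s => ?_⟩
  beta_reduce
  rw [h₁, h₂, mul_mul_mul_comm, ← exp_add]
  ring_nf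

lemma finsetProd {ι : Type*} {f g : ι → ℂ → ℂ} (F : Finset ι)
    (h : ∀ i, EqUpToExpQuadratic (f i) (g i)) :
    EqUpToExpQuadratic (fun s => ∏ i ∈ F, f i s) fun s => ∏ i ∈ F, g i s := by
  classical
  induction F using Finset.induction_on with
  | empty => exact ⟨0, 0, 0, fun s => by simp⟩
  | insert i F hi ih => simpa only [prod_insert hi] using (h i).mul ih

lemma of_tendsto [l.NeBot] {F G : α → ℂ → ℂ} (hFG : ∀ n, EqUpToExpQuadratic (F n) (G n))
    (hF : ∀ s, Tendsto (F · s) l (𝓝 (f s))) (hG : ∀ s, Tendsto (G · s) l (𝓝 (g s)))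
    (hf : ∀ᶠ s in 𝓝 0, f s ≠ 0) (hg : ∀ᶠ s in 𝓝 0, g s ≠ 0) : EqUpToExpQuadratic f g := by
  choose A B C hABC using hFG
  have hexp : ∀ᶠ s in 𝓝 0,
      Tendsto (fun n => exp (A n + B n * s + C n * s ^ 2)) l (𝓝 (f s / g s)) := by
    filter_upwards [hg] with s hs
    refine ((hF s).div (hG s) hs).congr' ?_
    filter_upwards [(hG s).eventually_ne hs] with n hn
    rw [Pi.div_apply, hABC, mul_div_cancel_right₀ _ hn]
  have hquot : ∀ᶠ s in 𝓝 0, f s / g s ≠ 0 := by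
    filter_upwards [hf, hg] with s using div_ne_zero
  obtain ⟨b, c, hB, hC⟩ := exists_tendsto_coeffs_of_tendsto_exp_quadratic hquot hexp
  have hA : Tendsto (fun n => exp (A n)) l (𝓝 (f 0 / g 0)) := by
    simpa using hexp.self_of_nhds
  refine of_eq_const_mul_exp hquot.self_of_nhds (b := b) (c := c) fun s => ?_
  refine tendsto_nhds_unique (hF s)
    (((hA.mul ((hB.mul_const s).add (hC.mul_const (s ^ 2))).cexp).mul (hG s)).congr fun n => ?_)
  rw [hABC, ← exp_add, add_assoc]

end EqUpToExpQuadratic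

lemma eqUpToExpQuadratic_one_sub_div_weierstrassFactor (ζ : ℂ) :
    EqUpToExpQuadratic (fun s => 1 - s / ζ) fun s => weierstrassFactor 2 (s / ζ) := by
  refine ⟨0, -1 / ζ, -1 / (2 * ζ ^ 2), fun s => ?_⟩
  have hexponent : 0 + -1 / ζ * s + -1 / (2 * ζ ^ 2) * s ^ 2 +
      ∑ j ∈ range 2, (s / ζ) ^ (j + 1) / ((j : ℂ) + 1) = 0 := by
    rw [sum_range_succ, sum_range_one]
    push_cast
    ring
  beta_reduce
  rw [weierstrassFactor, mul_left_comm, ← exp_add, hexponent, exp_zero, mul_one]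

end ExpQuadratic

section SineProduct

lemma prod_Icc_intCast_add (w : ℂ) (N : ℕ) :
    ∏ m ∈ Icc (-N : ℤ) N, ((m : ℂ) + w) =
      (w * ∏ j ∈ range N, (1 - w ^ 2 / ((j : ℂ) + 1) ^ 2)) *
        ∏ j ∈ range N, (-((j : ℂ) + 1) ^ 2) := by
  induction N with
  | zero => simp
  | succ N ih =>
    have hN : (N : ℂ) + 1 ≠ 0 := N.cast_add_one_ne_zero
    rw [Nat.cast_succ, Finset.Icc_succ_succ, prod_union (by simp), prod_pair (by lia), ih,
      prod_range_succ, prod_range_succ]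
    push_cast
    field_simp
    ring

lemma tendsto_prod_Icc_add_div_add (u : ℂ) {w : ℂ} (hw : sin (π * w) ≠ 0) :
    Tendsto (fun N : ℕ => ∏ m ∈ Icc (-N : ℤ) N, ((m : ℂ) + u) / (m + w)) atTop
      (𝓝 (sin (π * u) / sin (π * w))) := by
  refine ((tendsto_euler_sin_prod u).div (tendsto_euler_sin_prod w) hw).congr fun N => ?_
  have hscale : ∏ j ∈ range N, (-((j : ℂ) + 1) ^ 2) ≠ 0 :=
    prod_ne_zero_iff.2 fun j _ => neg_ne_zero.2 (pow_ne_zero 2 j.cast_add_one_ne_zero)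
  rw [Pi.div_apply, prod_div_distrib, prod_Icc_intCast_add, prod_Icc_intCast_add,
    mul_div_mul_right _ _ hscale, mul_assoc, mul_assoc,
    mul_div_mul_left _ _ (ofReal_ne_zero.2 Real.pi_ne_zero)]

lemma one_sub_exp_two_mul_I_mul (z : ℂ) :
    1 - exp (2 * I * z) = -2 * I * exp (I * z) * sin z := by
  have hneg : exp (-z * I) * exp (I * z) = 1 := by rw [← exp_add]; simp [mul_comm]
  have hsq : exp (2 * I * z) = exp (I * z) * exp (z * I) := by rw [← exp_add]; ring_nf
  rw [Complex.sin, hsq]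
  linear_combination -hneg + exp (I * z) * (exp (-z * I) - exp (z * I)) * I_sq

end SineProduct

lemma summable_norm_intCast_mul_add_rpow {ω₁ ω₂ : ℂ} (hω : LinearIndependent ℝ ![ω₁, ω₂])
    {r : ℝ} (hr : r < -2) : Summable fun p : ℤ × ℤ => ‖p.1 * ω₁ + p.2 * ω₂‖ ^ r := by
  let L : PeriodPair := ⟨ω₁, ω₂, hω⟩
  have hL := ZLattice.summable_norm_rpow L.lattice r (by simpa using hr)
  exact (hL.comp_injective L.latticeEquivProd.symm.injective).congr fun p => by
    simp only [Function.comp_apply, Submodule.coe_norm, L.latticeEquiv_symm_apply, L]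

section Funnel

variable {ℓ : ℝ}

lemma summable_inv_norm_funnelResonance_rpow (hℓ : ℓ ≠ 0) {τ : ℝ} (hτ : 2 < τ) :
    Summable fun p : ℕ × ℤ => ‖funnelResonance ℓ p.1 p.2‖⁻¹ ^ τ := by
  have hω : LinearIndependent ℝ ![1, 2 * π * I / ℓ] := by
    refine LinearIndependent.pair_iff.2 fun x y h => ?_
    have hre : x = 0 := by simpa [div_eq_mul_inv] using congrArg re h
    have him : y = 0 := by
      simpa [div_eq_mul_inv, hℓ, Real.pi_ne_zero] using congrArg im h
    exact ⟨hre, him⟩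
  have hinj : Function.Injective fun p : ℕ × ℤ => ((-(2 * p.1 + 1) : ℤ), p.2) := by
    rintro ⟨k, m⟩ ⟨k', m'⟩ h
    simpa using h
  refine ((summable_norm_intCast_mul_add_rpow hω (neg_lt_neg hτ)).comp_injective hinj).congr
    fun p => ?_
  rw [Function.comp_apply, Real.inv_rpow (norm_nonneg _), Real.rpow_neg (norm_nonneg _),
    funnelResonance]
  push_cast
  ring_nf

lemma summable_inv_norm_funnelResonance_pow_three (hℓ : ℓ ≠ 0) :
    Summable fun p : ℕ × ℤ => ‖funnelResonance ℓ p.1 p.2‖⁻¹ ^ (2 + 1) := by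
  exact_mod_cast summable_inv_norm_funnelResonance_rpow hℓ (τ := (2 + 1 : ℕ)) (by norm_num)

lemma re_funnelResonance (ℓ : ℝ) (k : ℕ) (m : ℤ) :
    (funnelResonance ℓ k m).re = -(2 * k + 1) := by
  simp [funnelResonance, div_eq_mul_inv]

lemma funnelResonance_ne_of_neg_one_lt_re {s : ℂ} (hs : -1 < s.re) (k : ℕ) (m : ℤ) :
    funnelResonance ℓ k m ≠ s := by
  rintro rfl
  rw [re_funnelResonance] at hs
  linarith [(k.cast_nonneg : (0 : ℝ) ≤ k)]

lemma eventually_neg_one_lt_re : ∀ᶠ s : ℂ in 𝓝 0, -1 < s.re :=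
  continuous_re.continuousAt.eventually_const_lt (by simp)

/-- The affine coordinate in which the `k`-th row of resonances becomes `ℤ`: it sends
`funnelResonance ℓ k m` to `-m`. -/
noncomputable def rowCoordinate (ℓ : ℝ) (k : ℕ) (s : ℂ) : ℂ :=
  I * (s + 2 * k + 1) * ℓ / (2 * π)

lemma two_mul_I_mul_pi_mul_rowCoordinate (ℓ : ℝ) (k : ℕ) (s : ℂ) :
    2 * I * (π * rowCoordinate ℓ k s) = -(s + 2 * k + 1) * ℓ := by
  have hπ : (π : ℂ) ≠ 0 := ofReal_ne_zero.2 Real.pi_ne_zero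
  rw [rowCoordinate]
  field_simp
  linear_combination (s + 2 * k + 1) * ℓ * I_sq

lemma one_sub_div_funnelResonance (hℓ : ℓ ≠ 0) (k : ℕ) (m : ℤ) (s : ℂ) :
    1 - s / funnelResonance ℓ k m = (m + rowCoordinate ℓ k s) / (m + rowCoordinate ℓ k 0) := by
  have hℓ : (ℓ : ℂ) ≠ 0 := ofReal_ne_zero.2 hℓ
  have hπ : (π : ℂ) ≠ 0 := ofReal_ne_zero.2 Real.pi_ne_zero
  have hsub (t : ℂ) : m + rowCoordinate ℓ k t = ℓ / (2 * π * I) * (funnelResonance ℓ k m - t) := by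
    rw [rowCoordinate, funnelResonance]
    field_simp
    linear_combination (t + 2 * k + 1) * ℓ * I_sq
  have hζ : funnelResonance ℓ k m ≠ 0 := funnelResonance_ne_of_neg_one_lt_re (by simp) k m
  rw [hsub, hsub, sub_zero, mul_div_mul_left _ _ (by simp [hℓ, hπ]), sub_div, div_self hζ]

lemma one_sub_exp_ne_zero_of_neg_one_lt_re (hℓ : 0 < ℓ) {s : ℂ} (hs : -1 < s.re) (k : ℕ) :
    1 - exp (-(s + 2 * k + 1) * ℓ) ≠ 0 := by
  intro h
  have hnorm : ‖exp (-(s + 2 * k + 1) * ℓ)‖ < 1 := by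
    have hre : (s + 2 * k + 1).re = s.re + 2 * k + 1 := by simp
    have hpos : 0 < s.re + 2 * k + 1 := by linarith [(k.cast_nonneg : (0 : ℝ) ≤ k)]
    rw [norm_exp, Real.exp_lt_one_iff, re_mul_ofReal, neg_re, hre]
    exact mul_neg_of_neg_of_pos (neg_lt_zero.2 hpos) hℓ
  rw [← sub_eq_zero.1 h, norm_one] at hnorm
  exact hnorm.false

lemma summable_norm_exp_neg_mul (hℓ : 0 < ℓ) (s : ℂ) :
    Summable fun k : ℕ => ‖-exp (-(s + 2 * k + 1) * ℓ)‖ := by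
  have hq : ‖exp (-2 * ℓ)‖ < 1 := by
    rw [norm_exp, Real.exp_lt_one_iff]
    simpa using hℓ
  refine ((summable_geometric_of_lt_one (norm_nonneg _) hq).mul_left
    ‖exp (-(s + 1) * ℓ)‖).congr fun k => ?_
  rw [norm_neg, ← norm_pow, ← norm_mul, ← exp_nat_mul, ← exp_add]
  ring_nf

lemma multipliable_one_sub_exp (hℓ : 0 < ℓ) (s : ℂ) :
    Multipliable fun k : ℕ => 1 - exp (-(s + 2 * k + 1) * ℓ) := by
  simpa only [← sub_eq_add_neg] using
    multipliable_one_add_of_summable (summable_norm_exp_neg_mul hℓ s)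

lemma eqUpToExpQuadratic_one_sub_exp_sin_div_sin {k : ℕ}
    (hsin : sin (π * rowCoordinate ℓ k 0) ≠ 0) :
    EqUpToExpQuadratic (fun s => 1 - exp (-(s + 2 * k + 1) * ℓ))
      fun s => sin (π * rowCoordinate ℓ k s) / sin (π * rowCoordinate ℓ k 0) := by
  refine .of_eq_const_mul_exp (b := -ℓ / 2) (c := 0)
    (K := -2 * I * exp (-(2 * k + 1) * ℓ / 2) * sin (π * rowCoordinate ℓ k 0))
    (by simp [hsin]) fun s => ?_
  have hexp : exp (I * (π * rowCoordinate ℓ k s)) =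
      exp (-(2 * k + 1) * ℓ / 2) * exp (-ℓ / 2 * s + 0 * s ^ 2) := by
    rw [← exp_add]
    congr 1
    linear_combination two_mul_I_mul_pi_mul_rowCoordinate ℓ k s / 2
  rw [← two_mul_I_mul_pi_mul_rowCoordinate, one_sub_exp_two_mul_I_mul, hexp]
  field_simp

lemma eqUpToExpQuadratic_one_sub_exp_canonicalProduct (hℓ : 0 < ℓ) (k : ℕ) :
    EqUpToExpQuadratic (fun s => 1 - exp (-(s + 2 * k + 1) * ℓ))
      (canonicalProduct 2 (funnelResonance ℓ k)) := by
  have hsin : ∀ s : ℂ, -1 < s.re → sin (π * rowCoordinate ℓ k s) ≠ 0 := fun s hs h =>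
    one_sub_exp_ne_zero_of_neg_one_lt_re hℓ hs k <| by
      rw [← two_mul_I_mul_pi_mul_rowCoordinate, one_sub_exp_two_mul_I_mul, h, mul_zero]
  have hsin₀ := hsin 0 (by simp)
  have hζ := (summable_inv_norm_funnelResonance_pow_three hℓ.ne').prod_factor k
  refine (eqUpToExpQuadratic_one_sub_exp_sin_div_sin hsin₀).trans <|
    .of_tendsto (l := atTop)
      (F := fun (N : ℕ) s => ∏ m ∈ Icc (-N : ℤ) N, (1 - s / funnelResonance ℓ k m))
      (fun N => .finsetProd _ fun m => eqUpToExpQuadratic_one_sub_div_weierstrassFactor _)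
      (fun s => ?_)
      (fun s => (multipliable_weierstrassFactor_div hζ s).hasProd.comp tendsto_Icc_neg) ?_ ?_
  · simpa only [one_sub_div_funnelResonance hℓ.ne'] using
      tendsto_prod_Icc_add_div_add (rowCoordinate ℓ k s) hsin₀
  · filter_upwards [eventually_neg_one_lt_re] with s hs
    exact div_ne_zero (hsin s hs) hsin₀
  · filter_upwards [eventually_neg_one_lt_re] with s hs
    exact canonicalProduct_ne_zero hζ (funnelResonance_ne_of_neg_one_lt_re hs k)

lemma eqUpToExpQuadratic_tprod_one_sub_exp_canonicalProduct (hℓ : 0 < ℓ) :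
    EqUpToExpQuadratic (fun s => ∏' k : ℕ, (1 - exp (-(s + 2 * k + 1) * ℓ)))
      (canonicalProduct 2 (Function.uncurry (funnelResonance ℓ))) := by
  have hζ := summable_inv_norm_funnelResonance_pow_three hℓ.ne'
  refine .of_tendsto (l := atTop)
    (fun K => .finsetProd (range K) fun k => eqUpToExpQuadratic_one_sub_exp_canonicalProduct hℓ k)
    (fun s => (multipliable_one_sub_exp hℓ s).hasProd.tendsto_prod_nat)
    (fun s => (hasProd_canonicalProduct_uncurry hζ s).tendsto_prod_nat) ?_ ?_
  · filter_upwards [eventually_neg_one_lt_re] with s hs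
    simpa only [← sub_eq_add_neg] using tprod_one_add_ne_zero_of_summable
      (f := fun k : ℕ => -exp (-(s + 2 * k + 1) * ℓ))
      (by simpa only [← sub_eq_add_neg] using one_sub_exp_ne_zero_of_neg_one_lt_re hℓ hs)
      (summable_norm_exp_neg_mul hℓ s)
  · filter_upwards [eventually_neg_one_lt_re] with s hs
    exact canonicalProduct_ne_zero hζ fun p => funnelResonance_ne_of_neg_one_lt_re hs p.1 p.2

lemma funnelHadamard_factor_eq (z s : ℂ) :
    (1 - s / z) ^ 2 * exp (2 * s / z + (s / z) ^ 2) = weierstrassFactor 2 (s / z) ^ 2 := by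
  rw [weierstrassFactor, mul_pow, ← exp_nat_mul]
  congr 2
  rw [sum_range_succ, sum_range_one]
  push_cast
  ring

lemma funnelHadamard_eq_canonicalProduct_sq (hℓ : ℓ ≠ 0) (s : ℂ) :
    funnelHadamard ℓ s = canonicalProduct 2 (Function.uncurry (funnelResonance ℓ)) s ^ 2 := by
  simp only [funnelHadamard, funnelHadamard_factor_eq]
  exact (multipliable_weierstrassFactor_div
    (summable_inv_norm_funnelResonance_pow_three hℓ) s).tprod_pow 2

lemma funnelZeta_eq_exp_mul_tprod_sq (hℓ : 0 < ℓ) (s : ℂ) :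
    funnelZeta ℓ s =
      exp (-s * ℓ / 4) * (∏' k : ℕ, (1 - exp (-(s + 2 * k + 1) * ℓ))) ^ 2 := by
  rw [funnelZeta, (multipliable_one_sub_exp hℓ s).tprod_pow]

lemma exists_norm_funnelHadamard_le (hℓ : ℓ ≠ 0) {η : ℝ} (hη : 0 < η) :
    ∃ C : ℝ, 0 < C ∧ ∀ s : ℂ, ‖funnelHadamard ℓ s‖ ≤ C * Real.exp (‖s‖ ^ (2 + η)) := by
  obtain ⟨τ, hτ, hτη⟩ := exists_between
    (lt_min (lt_add_of_pos_right 2 hη) (by norm_num : (2 : ℝ) < 2 + 1))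
  obtain ⟨hτη, hτ3⟩ := lt_min_iff.1 hτη
  set T : ℝ := 2 * 2 ^ τ * ∑' p : ℕ × ℤ, ‖funnelResonance ℓ p.1 p.2‖⁻¹ ^ τ
  have hP (s : ℂ) : ‖canonicalProduct 2 (Function.uncurry (funnelResonance ℓ)) s‖
      ≤ Real.exp (T * ‖s‖ ^ τ) :=
    norm_canonicalProduct_le (summable_inv_norm_funnelResonance_rpow hℓ hτ) (by linarith)
      (by exact_mod_cast hτ.le) (by exact_mod_cast hτ3.le) s
  have hT : 0 ≤ T := mul_nonneg (by positivity) (tsum_nonneg fun _ => by positivity)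
  obtain ⟨C, hC, hexp⟩ := exists_exp_mul_rpow_le (mul_nonneg two_pos.le hT) (by linarith) hτη
  refine ⟨C, hC, fun s => ?_⟩
  calc ‖funnelHadamard ℓ s‖
      = ‖canonicalProduct 2 (Function.uncurry (funnelResonance ℓ)) s‖ ^ 2 := by
        rw [funnelHadamard_eq_canonicalProduct_sq hℓ, norm_pow]
    _ ≤ Real.exp (T * ‖s‖ ^ τ) ^ 2 := by gcongr; exact hP s
    _ = Real.exp (2 * T * ‖s‖ ^ τ) := by
        rw [← Real.exp_nat_mul]
        push_cast
        ring_nf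
    _ ≤ C * Real.exp (‖s‖ ^ (2 + η)) := hexp _ (norm_nonneg s)

end Funnel

/-- Equations (2.8)–(2.10) of the paper: for `ℓ > 0`, (i) the Hadamard double product
`P_F(s)` converges for every `s`, defines an entire function of order at most two, and
(ii) `Z_F(s) = e^{p(s)} P_F(s)` for a polynomial `p` of degree at most two. -/
theorem funnelZeta_eq_hadamard (ℓ : ℝ) (hl : 0 < ℓ) :
    (∀ s : ℂ, Multipliable (fun p : ℕ × ℤ =>
        (1 - s / funnelResonance ℓ p.1 p.2) ^ 2 *
          Complex.exp (2 * s / funnelResonance ℓ p.1 p.2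
            + (s / funnelResonance ℓ p.1 p.2) ^ 2))) ∧
    (∀ s : ℂ, AnalyticAt ℂ (funnelHadamard ℓ) s) ∧
    (∀ η : ℝ, 0 < η → ∃ C : ℝ, 0 < C ∧
        ∀ s : ℂ, ‖funnelHadamard ℓ s‖ ≤ C * Real.exp (‖s‖ ^ (2 + η))) ∧
    (∃ a b c : ℂ, ∀ s : ℂ,
        funnelZeta ℓ s = Complex.exp (a + b * s + c * s ^ 2) * funnelHadamard ℓ s) := by
  have hζ := summable_inv_norm_funnelResonance_pow_three hl.ne'
  have hsq := funext (funnelHadamard_eq_canonicalProduct_sq hl.ne')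
  refine ⟨fun s => ?_, fun s => ?_, fun η hη => exists_norm_funnelHadamard_le hl.ne' hη, ?_⟩
  · simpa only [funnelHadamard_factor_eq] using (multipliable_weierstrassFactor_div hζ s).pow 2
  · rw [hsq]
    exact ((differentiable_canonicalProduct hζ).pow 2).analyticAt s
  · have hexp : EqUpToExpQuadratic (fun s => Complex.exp (-s * ℓ / 4)) fun _ => 1 :=
      ⟨0, -ℓ / 4, 0, fun s => by ring_nf⟩
    have hroot := eqUpToExpQuadratic_tprod_one_sub_exp_canonicalProduct hl
    obtain ⟨a, b, c, habc⟩ := hexp.mul (hroot.mul hroot)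
    refine ⟨a, b, c, fun s => ?_⟩
    simpa only [funnelZeta_eq_exp_mul_tprod_sq hl, hsq, sq, one_mul] using habc s
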